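/- With the apparatus fixed, let a and b be integers with 1 ≤ a < b, put H = 15(b−a), and suppose that b + H ≤ (2θ)^{−1}. Then there exist an integer h with 0 ≤ h < H and a constant C depending at most on s, k, r, t, N such that I_{a,b}(X) ≤ C((M^h)^{2s/3}·K_{a,b+h}(X) + (M^H)^{−s/4}·(X/M^b)^{2s}·(X/M^a)^{λ−2s}). -/

import Mathlib

open Filter MeasureTheory Finset

attribute [local instance] Classical.propDecidable

noncomputable section

/-- Number of integral solutions of the Vinogradov system of degree k
in 2s variables from [1,X]. -/
def Jcount (s k : ℕ) (X : ℝ) : ℕ :=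
  Set.ncard {xy : (Fin s → ℤ) × (Fin s → ℤ) |
    (∀ i, 1 ≤ xy.1 i ∧ (xy.1 i : ℝ) ≤ X) ∧
    (∀ i, 1 ≤ xy.2 i ∧ (xy.2 i : ℝ) ≤ X) ∧
    ∀ j ∈ Finset.Icc 1 k, ∑ i, ((xy.1 i) ^ j - (xy.2 i) ^ j) = 0}

/-- e(z) = exp(2πiz). -/
def ec (z : ℝ) : ℂ := Complex.exp (2 * Real.pi * Complex.I * z)

/-- The unit box [0,1)^k. -/
def box (k : ℕ) : Set (Fin k → ℝ) := Set.univ.pi fun _ => Set.Ico (0:ℝ) 1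

/-- The exponential sum f_c(α;ξ), over 1 ≤ x ≤ X with x ≡ ξ (mod p^c). -/
def fexp (k p : ℕ) (X : ℝ) (c : ℕ) (ξ : ℤ) (α : Fin k → ℝ) : ℂ :=
  ∑ x ∈ (Finset.Icc (1:ℤ) ⌊X⌋).filter (fun x => Int.ModEq ((p:ℤ)^c) x ξ),
    ec (∑ j : Fin k, α j * (x:ℝ)^((j:ℕ)+1))

/-- The set Ξ_c^r(ξ): r-tuples in [1,p^{c+1}], congruent to ξ mod p^c,
pairwise distinct mod p^{c+1}. -/
def XiSet (p r c : ℕ) (ξ : ℤ) : Set (Fin r → ℤ) :=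
  {v | (∀ i, 1 ≤ v i ∧ v i ≤ (p:ℤ)^(c+1)) ∧
       (∀ i, Int.ModEq ((p:ℤ)^c) (v i) ξ) ∧
       Function.Injective fun i => ((v i : ZMod (p^(c+1))))}

/-- The conditioned exponential sum F_c(α;ξ). -/
def Fexp (k p r : ℕ) (X : ℝ) (c : ℕ) (ξ : ℤ) (α : Fin k → ℝ) : ℂ :=
  ∑ᶠ v ∈ XiSet p r c ξ, ∏ i, fexp k p X (c+1) (v i) α

/-- The mean value I_{a,b}(X;ξ,η). -/
def Iab (k p r s : ℕ) (X : ℝ) (a b : ℕ) (ξ η : ℤ) : ℝ :=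
  ∫ α in box k, ‖Fexp k p r X a ξ α‖^2 * ‖fexp k p X b η α‖^(2*s)

/-- The mean value K_{a,b}(X;ξ,η). -/
def Kab (k p r t : ℕ) (X : ℝ) (a b : ℕ) (ξ η : ℤ) : ℝ :=
  ∫ α in box k, ‖Fexp k p r X a ξ α‖^2 * ‖Fexp k p r X b η α‖^(2*t)

/-- I_{a,b}(X): the maximum of I_{a,b}(X;ξ,η) over admissible ξ, η. -/
def Imax (k p r s : ℕ) (X : ℝ) (a b : ℕ) : ℝ :=
  sSup {v : ℝ | ∃ ξ η : ℤ, 1 ≤ ξ ∧ ξ ≤ (p:ℤ)^a ∧ 1 ≤ η ∧ η ≤ (p:ℤ)^b ∧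
    ¬ Int.ModEq (p:ℤ) η ξ ∧ v = Iab k p r s X a b ξ η}

/-- The set Ξ(η) of members of Ξ_0^r(0) avoiding the class of η mod p. -/
def XiTilde (p r : ℕ) (η : ℤ) : Set (Fin r → ℤ) :=
  {v | v ∈ XiSet p r 0 0 ∧ ∀ i, ¬ Int.ModEq (p:ℤ) (v i) η}

/-- The pre-conditioned sum F(α;η). -/
def Ftilde (k p r : ℕ) (X : ℝ) (η : ℤ) (α : Fin k → ℝ) : ℂ :=
  ∑ᶠ v ∈ XiTilde p r η, ∏ i, fexp k p X 1 (v i) α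

/-- The mean value K̃_c(X;η). -/
def Ktilde (k p r t : ℕ) (X : ℝ) (c : ℕ) (η : ℤ) : ℝ :=
  ∫ α in box k, ‖Ftilde k p r X η α‖^2 * ‖Fexp k p r X c η α‖^(2*t)

/-- K_{a,b}(X): for a ≥ 1 the maximum of K_{a,b}(X;ξ,η) over admissible ξ, η;
for a = 0 the pre-congruencing quantity K_{0,b}(X) = max_η K̃_b(X;η). -/
def Kmax (k p r t : ℕ) (X : ℝ) (a b : ℕ) : ℝ :=
  if a = 0 then sSup {v : ℝ | ∃ η : ℤ, 1 ≤ η ∧ η ≤ (p:ℤ)^b ∧ v = Ktilde k p r t X b η}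
  else sSup {v : ℝ | ∃ ξ η : ℤ, 1 ≤ ξ ∧ ξ ≤ (p:ℤ)^a ∧ 1 ≤ η ∧ η ≤ (p:ℤ)^b ∧
    ¬ Int.ModEq (p:ℤ) η ξ ∧ v = Kab k p r t X a b ξ η}

/-- λ = limsup_{Y→∞} log J_{sr,k}(Y)/log Y. -/
def lamExp (k sr : ℕ) : ℝ :=
  Filter.limsup (fun Y : ℝ => Real.log ((Jcount sr k Y : ℝ)) / Real.log Y) Filter.atTop

/-- θ = (16t)^{-N-1}. -/
def thetaC (t N : ℕ) : ℝ := (16*(t:ℝ)) ^ (-((N:ℝ)+1))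

/-- δ = θ/(1000 N t^N). -/
def deltaC (t N : ℕ) : ℝ := thetaC t N / (1000 * (N:ℝ) * (t:ℝ)^N)

/-- M = X^θ. -/
def Mval (t N : ℕ) (X : ℝ) : ℝ := X ^ thetaC t N

/-- κ = r(t+1) - (1/2)(t+r-k)(t+r-k-1+(2r-2)/(t-1)). -/
def kappa (k r t : ℕ) : ℝ :=
  (r : ℝ) * ((t : ℝ) + 1) -
    (1/2) * ((t : ℝ) + r - k) * ((t : ℝ) + r - k - 1 + (2*(r:ℝ) - 2)/((t:ℝ) - 1))

/-- Λ = λ - 2(s+r) + κ, with s = rt. -/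
def LamC (k r t : ℕ) : ℝ := lamExp k (r*(t+1)) - 2*((r*(t+1) : ℕ) : ℝ) + kappa k r t

/-- The normalised mean value ⟦K_{a,b}(X)⟧ = K_{a,b}(X) (X/M^b)^{-2s} (X/M^a)^{κ-2r}. -/
def normK (k p r t N : ℕ) (X : ℝ) (a b : ℕ) : ℝ :=
  Kmax k p r t X a b * (X / (Mval t N X)^b) ^ (-(2*((r*t : ℕ):ℝ))) *
    (X / (Mval t N X)^a) ^ (kappa k r t - 2*(r:ℝ))

/-- μ = (1/2)(t+r-k)(t+r-k-1). -/
def muC (k r t : ℕ) : ℝ := (1/2) * ((t:ℝ)+r-k) * ((t:ℝ)+r-k-1)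

/-- ν = (1/2)(t+r-k)(k+r-t-1). -/
def nuC (k r t : ℕ) : ℝ := (1/2) * ((t:ℝ)+r-k) * ((k:ℝ)+r-t-1)

/-!
All the exponential sums involved are trigonometric polynomials with nonnegative coefficients, and
an even moment of such a sum can only grow when frequencies are added. Expand `f_b(α; η)^s` into
words of length `s` in the residue classes modulo `p ^ (b + 1)` above `η`. As `s ≥ 2r`, a word
either contains `r` distinct letters or repeats a letter three times. By Young's inequality, words
of the first kind contribute a multiple of `K_{a,b}` and words of the second kind a multiple of
`p ^ (2s/3) * I_{a,b+1}`, in both cases up to a small multiple of `I_{a,b}`, which is absorbed.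
Hence `I_{a,b} ≪ K_{a,b} + M ^ (2s/3) * I_{a,b+1}`.

Iterating `H` times and keeping the largest of the `K`-terms leaves `M ^ (2sH/3) * I_{a,b+H}`. The
last mean value is estimated trivially: Young's inequality splits it into moments of order
`2(s + r)`, which the hypothesis on `J_{s+r,k}` controls, and `H = 15(b - a)` is long enough for
the resulting saving to win.
-/

/-! ### Trigonometric polynomials with nonnegative coefficients -/

lemma ec_sum {ι : Type*} (s : Finset ι) (f : ι → ℝ) : ec (∑ i ∈ s, f i) = ∏ i ∈ s, ec (f i) := by
  simp only [ec, ← Complex.exp_sum, Complex.ofReal_sum, Finset.mul_sum]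

lemma ec_add (x y : ℝ) : ec (x + y) = ec x * ec y := by
  simp only [ec, ← Complex.exp_add, Complex.ofReal_add, mul_add]

lemma ec_zero : ec 0 = 1 := by simp [ec]

lemma star_ec (x : ℝ) : star (ec x) = ec (-x) := by
  simp [ec, ← Complex.exp_conj, Complex.conj_ofNat]

lemma continuous_ec : Continuous ec := by
  unfold ec
  fun_prop

lemma integral_Ico_ec (n : ℤ) :
    ∫ x in Set.Ico (0 : ℝ) 1, ec (x * n) = if n = 0 then 1 else 0 := by
  split_ifs with hn
  · simp [hn, ec_zero]
  have hc : (2 * Real.pi * Complex.I * n : ℂ) ≠ 0 := by simp [Real.pi_ne_zero, hn]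
  have hperiod : Complex.exp (2 * Real.pi * Complex.I * n) = 1 :=
    Complex.exp_eq_one_iff.2 ⟨n, by ring⟩
  have hec (x : ℝ) : ec (x * n) = Complex.exp (2 * Real.pi * Complex.I * n * x) := by
    rw [ec]
    push_cast
    ring_nf
  rw [integral_Ico_eq_integral_Ioc, ← intervalIntegral.integral_of_le zero_le_one]
  simp_rw [hec]
  simp [integral_exp_mul_complex hc, hperiod]

/-- The character `α ↦ e(α · v)` of `ℝᵏ` attached to an integer vector `v`, as a function of `v`. -/
def trigChar (k : ℕ) : AddChar (Fin k → ℤ) ((Fin k → ℝ) → ℂ) where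
  toFun v α := ec (∑ j, α j * v j)
  map_zero_eq_one' := by
    ext α
    simp [ec_zero]
  map_add_eq_mul' v w := by
    ext α
    simp [← ec_add, mul_add, Finset.sum_add_distrib]

lemma trigChar_apply {k : ℕ} (v : Fin k → ℤ) (α : Fin k → ℝ) :
    trigChar k v α = ec (∑ j, α j * v j) := rfl

lemma trigChar_sum {k : ℕ} {ι : Type*} (s : Finset ι) (v : ι → Fin k → ℤ) :
    trigChar k (∑ i ∈ s, v i) = ∏ i ∈ s, trigChar k (v i) :=
  map_prod (trigChar k).toMonoidHom (fun i ↦ Multiplicative.ofAdd (v i)) s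

lemma star_trigChar {k : ℕ} (v : Fin k → ℤ) : star (trigChar k v) = trigChar k (-v) := by
  ext α
  simp [trigChar_apply, star_ec]

lemma continuous_trigChar {k : ℕ} (v : Fin k → ℤ) : Continuous (trigChar k v) :=
  continuous_ec.comp (by fun_prop)

lemma integral_trigChar {k : ℕ} (v : Fin k → ℤ) :
    ∫ α in box k, trigChar k v α = if v = 0 then 1 else 0 := by
  simp_rw [trigChar_apply, ec_sum]
  rw [_root_.box, volume_pi, Measure.restrict_pi_pi,
    integral_fintype_prod_eq_prod (f := fun j x ↦ ec (x * v j))]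
  simp [integral_Ico_ec, Finset.prod_ite_zero, funext_iff]

lemma integrableOn_box {E : Type*} [NormedAddCommGroup E] {k : ℕ} {g : (Fin k → ℝ) → E}
    (hg : Continuous g) : IntegrableOn g (box k) := by
  refine (hg.integrableOn_Icc (a := 0) (b := 1)).mono_set fun α hα ↦ ?_
  simp only [_root_.box, Set.mem_univ_pi, Set.mem_Ico] at hα
  exact ⟨fun i ↦ (hα i).1, fun i ↦ (hα i).2.le⟩

/-- The semiring of trigonometric polynomials in `k` variables with coefficients in `ℕ`. The
relation `g - f ∈ posTrig k`, which orders trigonometric polynomials coefficientwise, stands in for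
pointwise inequalities: it is preserved by products and controls even moments. -/
def posTrig (k : ℕ) : Subsemiring ((Fin k → ℝ) → ℂ) :=
  (MonoidHom.mrange (trigChar k).toMonoidHom).subsemiringClosure

lemma mem_posTrig_iff {k : ℕ} {g : (Fin k → ℝ) → ℂ} :
    g ∈ posTrig k ↔ g ∈ AddSubmonoid.closure (Set.range (trigChar k)) :=
  Submonoid.subsemiringClosure_mem (MonoidHom.mrange (trigChar k).toMonoidHom)

lemma trigChar_mem_posTrig {k : ℕ} (v : Fin k → ℤ) : trigChar k v ∈ posTrig k :=
  mem_posTrig_iff.2 (AddSubmonoid.subset_closure ⟨v, rfl⟩)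

lemma star_mem_posTrig {k : ℕ} {g : (Fin k → ℝ) → ℂ} (hg : g ∈ posTrig k) :
    star g ∈ posTrig k := by
  rw [mem_posTrig_iff] at hg
  induction hg using AddSubmonoid.closure_induction with
  | mem _ h =>
    obtain ⟨v, rfl⟩ := h
    exact star_trigChar v ▸ trigChar_mem_posTrig _
  | zero => simp
  | add f g _ _ hf hg => simpa using add_mem hf hg

lemma continuous_of_mem_posTrig {k : ℕ} {g : (Fin k → ℝ) → ℂ} (hg : g ∈ posTrig k) :
    Continuous g := by
  rw [mem_posTrig_iff] at hg
  induction hg using AddSubmonoid.closure_induction with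
  | mem _ h =>
    obtain ⟨v, rfl⟩ := h
    exact continuous_trigChar v
  | zero => exact continuous_zero
  | add f g _ _ hf hg => exact hf.add hg

lemma integral_re_nonneg_of_mem_posTrig {k : ℕ} {g : (Fin k → ℝ) → ℂ} (hg : g ∈ posTrig k) :
    0 ≤ ∫ α in box k, (g α).re := by
  have hre {f : (Fin k → ℝ) → ℂ} (hf : f ∈ posTrig k) :
      ∫ α in box k, (f α).re = (∫ α in box k, f α).re :=
    integral_re (𝕜 := ℂ) (integrableOn_box (continuous_of_mem_posTrig hf))
  rw [hre hg]
  rw [mem_posTrig_iff] at hg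
  induction hg using AddSubmonoid.closure_induction with
  | mem _ h =>
    obtain ⟨v, rfl⟩ := h
    rw [integral_trigChar]
    split_ifs <;> simp
  | zero => simp
  | add f g hf hg hf' hg' =>
    rw [← mem_posTrig_iff] at hf hg
    simp only [Pi.add_apply]
    rw [integral_add (integrableOn_box (continuous_of_mem_posTrig hf))
      (integrableOn_box (continuous_of_mem_posTrig hg)), Complex.add_re]
    exact add_nonneg hf' hg'

lemma integral_re_le_of_sub_mem_posTrig {k : ℕ} {f g : (Fin k → ℝ) → ℂ} (hf : Continuous f)
    (hfg : g - f ∈ posTrig k) : ∫ α in box k, (f α).re ≤ ∫ α in box k, (g α).re := by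
  have hg : Continuous g := sub_add_cancel g f ▸ (continuous_of_mem_posTrig hfg).add hf
  have hre {h : (Fin k → ℝ) → ℂ} (hh : Continuous h) :
      IntegrableOn (fun α ↦ (h α).re) (box k) := integrableOn_box (by fun_prop)
  rw [← sub_nonneg, ← integral_sub (hre hg) (hre hf)]
  exact integral_re_nonneg_of_mem_posTrig hfg

lemma pow_sub_pow_mem {A : Type*} [CommRing A] {P : Subsemiring A} {x y : A} (hx : x ∈ P)
    (hxy : y - x ∈ P) (n : ℕ) : y ^ n - x ^ n ∈ P := by
  have hy : y ∈ P := sub_add_cancel y x ▸ add_mem hxy hx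
  rw [← geom_sum₂_mul]
  exact mul_mem (sum_mem fun i _ ↦ mul_mem (pow_mem hy _) (pow_mem hx _)) hxy

lemma re_mul_star_self_pow (z : ℂ) (n : ℕ) : ((z * star z) ^ n).re = ‖z‖ ^ (2 * n) := by
  rw [Complex.star_def, Complex.mul_conj', ← pow_mul, ← Complex.ofReal_pow, Complex.ofReal_re]

lemma integral_norm_pow_le_of_sub_mem_posTrig {k : ℕ} {f g : (Fin k → ℝ) → ℂ}
    (hf : f ∈ posTrig k) (hfg : g - f ∈ posTrig k) (n : ℕ) :
    ∫ α in box k, ‖f α‖ ^ (2 * n) ≤ ∫ α in box k, ‖g α‖ ^ (2 * n) := by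
  have hff : f * star f ∈ posTrig k := mul_mem hf (star_mem_posTrig hf)
  have hsq : g * star g - f * star f ∈ posTrig k := by
    have hg : g ∈ posTrig k := sub_add_cancel g f ▸ add_mem hfg hf
    have hsplit : g * star g - f * star f = g * star (g - f) + (g - f) * star f := by
      rw [star_sub]
      ring
    rw [hsplit]
    exact add_mem (mul_mem hg (star_mem_posTrig hfg)) (mul_mem hfg (star_mem_posTrig hf))
  have hmono := integral_re_le_of_sub_mem_posTrig (continuous_of_mem_posTrig (pow_mem hff n))
    (pow_sub_pow_mem hff hsq n)
  simpa only [Pi.pow_apply, Pi.mul_apply, Pi.star_apply, re_mul_star_self_pow] using hmono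

/-! ### Moments and Vinogradov systems -/

/-- The vector `(x, x², …, xᵏ)`. -/
def powVec (k : ℕ) (x : ℤ) : Fin k → ℤ := fun j ↦ x ^ ((j : ℕ) + 1)

lemma sum_powVec_sub_eq_zero_iff {ι : Type*} [Fintype ι] {k : ℕ} {x y : ι → ℤ} :
    ∑ i, powVec k (x i) - ∑ i, powVec k (y i) = 0 ↔
      ∀ j ∈ Icc 1 k, ∑ i, (x i ^ j - y i ^ j) = 0 := by
  simp only [funext_iff, Pi.sub_apply, Finset.sum_apply, powVec, Pi.zero_apply,
    Finset.sum_sub_distrib, Finset.mem_Icc]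
  refine ⟨fun h j hj ↦ ?_, fun h j ↦ h (j + 1) ⟨by omega, j.isLt⟩⟩
  simpa only [Nat.sub_add_cancel hj.1] using h ⟨j - 1, by omega⟩

/-- The solutions `(x, y)` of the Vinogradov system of degree `k` in `2u` variables from `S`. -/
def vinogradovSolutions (u k : ℕ) (S : Finset ℤ) : Finset ((Fin u → ℤ) × (Fin u → ℤ)) :=
  {v ∈ (Fintype.piFinset fun _ ↦ S) ×ˢ (Fintype.piFinset fun _ ↦ S) |
    ∀ j ∈ Icc 1 k, ∑ i, (v.1 i ^ j - v.2 i ^ j) = 0}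

lemma mem_vinogradovSolutions {u k : ℕ} {S : Finset ℤ} {v : (Fin u → ℤ) × (Fin u → ℤ)} :
    v ∈ vinogradovSolutions u k S ↔
      ((∀ i, v.1 i ∈ S) ∧ ∀ i, v.2 i ∈ S) ∧ ∀ j ∈ Icc 1 k, ∑ i, (v.1 i ^ j - v.2 i ^ j) = 0 := by
  simp [vinogradovSolutions]

lemma Jcount_eq_card (u k : ℕ) (X : ℝ) :
    Jcount u k X = #(vinogradovSolutions u k (Icc 1 ⌊X⌋)) := by
  rw [← Set.ncard_coe_finset, Jcount]
  congr 1
  ext v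
  simp [mem_vinogradovSolutions, Int.le_floor, and_assoc]

lemma Jcount_mono (u k : ℕ) {X Y : ℝ} (h : X ≤ Y) : Jcount u k X ≤ Jcount u k Y := by
  rw [Jcount_eq_card, Jcount_eq_card]
  refine Finset.card_le_card fun v hv ↦ ?_
  rw [mem_vinogradovSolutions] at hv ⊢
  have hIcc : Icc 1 ⌊X⌋ ⊆ Icc 1 ⌊Y⌋ := Finset.Icc_subset_Icc_right (Int.floor_le_floor h)
  exact ⟨⟨fun i ↦ hIcc (hv.1.1 i), fun i ↦ hIcc (hv.1.2 i)⟩, hv.2⟩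

lemma natCast_pow_le_Jcount (u k n : ℕ) : n ^ u ≤ Jcount u k n := by
  have hcard : #(Fintype.piFinset fun _ : Fin u ↦ Icc (1 : ℤ) n) = n ^ u := by simp
  rw [← hcard, Jcount_eq_card, Int.floor_natCast]
  refine Finset.card_le_card_of_injOn (fun x ↦ (x, x)) (fun x hx ↦ ?_) fun x _ y _ hxy ↦
    congrArg Prod.fst hxy
  rw [Finset.mem_coe, Fintype.mem_piFinset] at hx
  exact mem_vinogradovSolutions.2 ⟨⟨hx, hx⟩, by simp⟩

lemma integral_norm_sum_trigChar_pow (u k : ℕ) (S : Finset ℤ) :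
    ∫ α in box k, ‖(∑ x ∈ S, trigChar k (powVec k x)) α‖ ^ (2 * u) =
      #(vinogradovSolutions u k S) := by
  set f := ∑ x ∈ S, trigChar k (powVec k x) with hf
  set V := (Fintype.piFinset fun _ : Fin u ↦ S) ×ˢ (Fintype.piFinset fun _ : Fin u ↦ S)
  let w (v : (Fin u → ℤ) × (Fin u → ℤ)) := ∑ i, powVec k (v.1 i) - ∑ i, powVec k (v.2 i)
  have hexpand : (f * star f) ^ u = ∑ v ∈ V, trigChar k (w v) := by
    rw [mul_pow, ← star_pow, hf, Finset.sum_pow']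
    simp only [star_sum, Finset.sum_mul_sum, ← Finset.sum_product', ← trigChar_sum, star_trigChar,
      ← AddChar.map_add_eq_mul, ← sub_eq_add_neg, V, w]
  have hint v (_ : v ∈ V) : IntegrableOn (trigChar k (w v)) (box k) :=
    integrableOn_box (continuous_trigChar _)
  have hnorm α : ‖f α‖ ^ (2 * u) = (∑ v ∈ V, trigChar k (w v) α).re := by
    rw [← re_mul_star_self_pow, ← Finset.sum_apply, ← hexpand]
    simp
  calc ∫ α in box k, ‖f α‖ ^ (2 * u)
      = ∫ α in box k, (∑ v ∈ V, trigChar k (w v) α).re := by simp_rw [hnorm]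
    _ = (∑ v ∈ V, ∫ α in box k, trigChar k (w v) α).re := by
        rw [← integral_finsetSum _ hint]
        exact integral_re (𝕜 := ℂ) (integrable_finsetSum _ hint)
    _ = #(vinogradovSolutions u k S) := by
        simp [integral_trigChar, w, sum_powVec_sub_eq_zero_iff, vinogradovSolutions, V]

lemma sum_sub_pow_eq_zero_of_translate {ι : Type*} [Fintype ι] {k : ℕ} {x y : ι → ℤ}
    (h : ∀ j ∈ Icc 1 k, ∑ i, (x i ^ j - y i ^ j) = 0) (z : ℤ) {j : ℕ} (hj : j ≤ k) :
    ∑ i, ((x i - z) ^ j - (y i - z) ^ j) = 0 := by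
  have hbinom i : (x i - z) ^ j - (y i - z) ^ j =
      ∑ m ∈ range (j + 1), (-z) ^ (j - m) * j.choose m * (x i ^ m - y i ^ m) := by
    simp_rw [sub_eq_add_neg _ z, add_pow, ← Finset.sum_sub_distrib]
    exact Finset.sum_congr rfl fun m _ ↦ by ring
  simp_rw [hbinom]
  rw [Finset.sum_comm]
  refine Finset.sum_eq_zero fun m hm ↦ ?_
  rw [← Finset.mul_sum]
  rcases m.eq_zero_or_pos with rfl | hm0
  · simp
  · rw [h m (Finset.mem_Icc.2 ⟨hm0, (Finset.mem_range_succ_iff.1 hm).trans hj⟩), mul_zero]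

lemma card_vinogradovSolutions_le_of_affine {u k : ℕ} {S T : Finset ℤ} {q z : ℤ} (hq : q ≠ 0)
    (h : ∀ x ∈ S, ∃ y ∈ T, q * y + z = x) :
    #(vinogradovSolutions u k S) ≤ #(vinogradovSolutions u k T) := by
  refine Finset.card_le_card_of_surjOn
    (fun w ↦ (fun i ↦ q * w.1 i + z, fun i ↦ q * w.2 i + z)) ?_
  rintro ⟨x, y⟩ hxy
  rw [Finset.mem_coe, mem_vinogradovSolutions] at hxy
  obtain ⟨⟨hx, hy⟩, hpow⟩ := hxy
  choose x' hx' hxx' using fun i ↦ h (x i) (hx i)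
  choose y' hy' hyy' using fun i ↦ h (y i) (hy i)
  refine ⟨(x', y'), mem_vinogradovSolutions.2 ⟨⟨hx', hy'⟩, fun j hj ↦ ?_⟩,
    Prod.ext (funext hxx') (funext hyy')⟩
  have htrans := sum_sub_pow_eq_zero_of_translate hpow z (Finset.mem_Icc.1 hj).2
  simp_rw [← hxx', ← hyy', add_sub_cancel_right, mul_pow, ← mul_sub, ← Finset.mul_sum] at htrans
  exact (mul_eq_zero.1 htrans).resolve_left (pow_ne_zero _ hq)

lemma fexp_eq_sum_trigChar (k p : ℕ) (X : ℝ) (c : ℕ) (ξ : ℤ) :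
    fexp k p X c ξ = ∑ x ∈ Icc 1 ⌊X⌋ with x ≡ ξ [ZMOD (p : ℤ) ^ c], trigChar k (powVec k x) := by
  ext α
  simp [fexp, trigChar_apply, powVec, Finset.sum_apply]

lemma integral_norm_fexp_pow_le_Jcount (k : ℕ) {p : ℕ} (hp : 0 < p) (u : ℕ) (X : ℝ) (c : ℕ)
    (ξ : ℤ) :
    ∫ α in box k, ‖fexp k p X c ξ α‖ ^ (2 * u) ≤ Jcount u k (X / (p : ℝ) ^ c + 1) := by
  rw [fexp_eq_sum_trigChar, integral_norm_sum_trigChar_pow, Jcount_eq_card, Nat.cast_le]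
  have hq : 0 < (p : ℤ) ^ c := by positivity
  have hqR : ((p : ℝ) ^ c) = ((p : ℤ) ^ c : ℤ) := by push_cast; rfl
  rw [hqR]
  generalize (p : ℤ) ^ c = q at hq ⊢
  have hqR0 : (0 : ℝ) < q := Int.cast_pos.2 hq
  refine card_vinogradovSolutions_le_of_affine (z := ξ % q - q) hq.ne' fun x hx ↦ ?_
  obtain ⟨hxI, hxξ⟩ := Finset.mem_filter.1 hx
  rw [Finset.mem_Icc, Int.le_floor] at hxI
  refine ⟨x / q + 1, Finset.mem_Icc.2 ⟨?_, Int.le_floor.2 ?_⟩, ?_⟩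
  · have := Int.ediv_nonneg (zero_le_one.trans hxI.1) hq.le
    omega
  · push_cast
    gcongr
    rw [le_div_iff₀ hqR0]
    calc ((x / q : ℤ) : ℝ) * q ≤ x := by exact_mod_cast Int.ediv_mul_le x hq.ne'
      _ ≤ X := hxI.2
  · rw [← hxξ]
    linarith [Int.emod_add_mul_ediv x q]

/-! ### Words with distinct or repeated letters -/

lemma exists_embedding_or_const {ι R : Type*} [Fintype ι] {m r : ℕ} (hm : 0 < m)
    (hmr : m * r ≤ Fintype.card ι) (v : ι → R) :
    (∃ (e : Fin r ↪ ι) (u : Fin r ↪ R), v ∘ e = u) ∨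
      ∃ (e : Fin (m + 1) ↪ ι) (ρ : R), v ∘ e = fun _ ↦ ρ := by
  rcases le_or_gt r (Fintype.card (Set.range v)) with hr | hr
  · obtain ⟨u⟩ := Function.Embedding.nonempty_of_card_le
      ((Fintype.card_fin r).trans_le hr)
    exact .inl ⟨u.trans ⟨Set.rangeSplitting v, Set.rangeSplitting_injective v⟩,
      u.trans (Function.Embedding.subtype _), funext fun i ↦ Set.apply_rangeSplitting v (u i)⟩
  · obtain ⟨ρ, hρ⟩ := Fintype.exists_lt_card_fiber_of_mul_lt_card (Set.rangeFactorization v)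
      (n := m) (by nlinarith)
    rw [← Fintype.card_subtype] at hρ
    obtain ⟨e⟩ := Function.Embedding.nonempty_of_card_le
      ((Fintype.card_fin (m + 1)).trans_le hρ)
    exact .inr ⟨e.trans (Function.Embedding.subtype _), ρ,
      funext fun i ↦ congrArg Subtype.val (e i).2⟩

lemma sum_prod_filter_comp_eq {ι κ R A : Type*} [Fintype ι] [DecidableEq ι] [Fintype κ]
    [Fintype R] [CommSemiring A] (g : R → A) (e : κ ↪ ι) (u : κ → R) :
    ∑ v : ι → R with v ∘ e = u, ∏ i, g (v i) =
      (∏ j, g (u j)) * (∑ ρ, g ρ) ^ (Fintype.card ι - Fintype.card κ) := by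
  let t (i : ι) : Finset R := {ρ | ∀ j, e j = i → ρ = u j}
  have hpi : ({v | v ∘ e = u} : Finset (ι → R)) = Fintype.piFinset t := by
    ext v
    simp only [t, Finset.mem_filter, Finset.mem_univ, true_and, Fintype.mem_piFinset, funext_iff,
      Function.comp_apply]
    exact ⟨fun h i j hj ↦ hj ▸ h j, fun h j ↦ h _ j rfl⟩
  have hrange j : t (e j) = {u j} := by
    ext ρ
    simp [t]
  have hcompl i (hi : i ∈ (univ.map e)ᶜ) : t i = univ := by
    rw [Finset.mem_compl, Finset.mem_map] at hi
    refine Finset.filter_true_of_mem fun ρ _ j hj ↦ (hi ⟨j, Finset.mem_univ j, hj⟩).elim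
  rw [hpi, ← Finset.prod_univ_sum, ← Finset.prod_mul_prod_compl (univ.map e), Finset.prod_map]
  congr 1
  · simp only [hrange, Finset.sum_singleton]
  · rw [Finset.prod_congr rfl fun i hi ↦ congrArg (fun T ↦ ∑ ρ ∈ T, g ρ) (hcompl i hi),
      Finset.prod_const, Finset.card_compl, Finset.card_map, Finset.card_univ]

lemma sum_sum_filter_sub_sum_mem {ι V A : Type*} [Fintype ι] [Fintype V] [AddCommGroup A]
    {P : AddSubmonoid A} {Q : ι → V → Prop} {φ : V → A} (hφ : ∀ v, φ v ∈ P)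
    (hcover : ∀ v, ∃ i, Q i v) : ∑ i, ∑ v with Q i v, φ v - ∑ v, φ v ∈ P := by
  simp_rw [Finset.sum_filter]
  rw [Finset.sum_comm, ← Finset.sum_sub_distrib]
  refine sum_mem fun v _ ↦ ?_
  obtain ⟨i, hi⟩ := hcover v
  rw [← Finset.sum_erase_add _ _ (Finset.mem_univ i), if_pos hi, add_sub_cancel_right]
  refine sum_mem fun j _ ↦ ?_
  split_ifs
  exacts [hφ v, zero_mem P]

/-- The part of the expansion of `(∑ ρ, g ρ) ^ r` coming from tuples with distinct entries: the
abstract form of the conditioned exponential sum `Fexp`. -/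
def conditionedSum {R A : Type*} [Fintype R] [CommSemiring A] (g : R → A) (r : ℕ) : A :=
  ∑ u : Fin r ↪ R, ∏ i, g (u i)

lemma conditionedSum_mem {R A : Type*} [Fintype R] [CommSemiring A] {P : Subsemiring A} {g : R → A}
    (hg : ∀ ρ, g ρ ∈ P) (r : ℕ) : conditionedSum g r ∈ P :=
  sum_mem fun _ _ ↦ prod_mem fun _ _ ↦ hg _

lemma sum_pow_sub_conditionedSum_mem {R A : Type*} [Fintype R] [CommRing A] {P : Subsemiring A}
    {g : R → A} (hg : ∀ ρ, g ρ ∈ P) (r : ℕ) : (∑ ρ, g ρ) ^ r - conditionedSum g r ∈ P := by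
  have hinj : conditionedSum g r =
      ∑ u ∈ univ.map ⟨fun e : Fin r ↪ R ↦ ⇑e, DFunLike.coe_injective⟩, ∏ i, g (u i) := by
    rw [conditionedSum, Finset.sum_map]
    rfl
  rw [hinj, Fintype.sum_pow, ← Finset.sum_compl_add_sum, add_sub_cancel_right]
  exact sum_mem fun _ _ ↦ prod_mem fun _ _ ↦ hg _

/-- Pigeonhole in generating-function form: a word of length `s ≥ mr` has `r` distinct letters or
a letter repeated `m + 1` times. -/
lemma conditionedSum_add_sum_pow_sub_sum_pow_mem {R A : Type*} [Fintype R] [CommRing A]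
    {P : Subsemiring A} {g : R → A} (hg : ∀ ρ, g ρ ∈ P) {m r s : ℕ} (hm : 0 < m)
    (hmr : m * r ≤ s) :
    s.descFactorial r * (conditionedSum g r * (∑ ρ, g ρ) ^ (s - r)) +
      s.descFactorial (m + 1) * ∑ ρ, g ρ ^ (m + 1) * (∑ ρ, g ρ) ^ (s - (m + 1)) -
      (∑ ρ, g ρ) ^ s ∈ P := by
  let Q : (Fin r ↪ Fin s) × (Fin r ↪ R) ⊕ (Fin (m + 1) ↪ Fin s) × R → (Fin s → R) → Prop :=
    Sum.elim (fun i v ↦ v ∘ i.1 = i.2) (fun i v ↦ v ∘ i.1 = fun _ ↦ i.2)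
  have hcover v : ∃ i, Q i v := by
    obtain ⟨e, u, h⟩ | ⟨e, ρ, h⟩ := exists_embedding_or_const hm (hmr.trans_eq (by simp)) v
    exacts [⟨.inl (e, u), h⟩, ⟨.inr (e, ρ), h⟩]
  have hdistinct (e : Fin r ↪ Fin s) (u : Fin r ↪ R) :
      ∑ v with Q (.inl (e, u)) v, ∏ j, g (v j) = (∏ j, g (u j)) * (∑ ρ, g ρ) ^ (s - r) := by
    convert sum_prod_filter_comp_eq g e u <;> simp [Q]
  have hrepeated (e : Fin (m + 1) ↪ Fin s) (ρ : R) :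
      ∑ v with Q (.inr (e, ρ)) v, ∏ j, g (v j) =
        g ρ ^ (m + 1) * (∑ ρ, g ρ) ^ (s - (m + 1)) := by
    convert sum_prod_filter_comp_eq g e fun _ ↦ ρ <;> simp [Q]
  have hunion : ∑ i, ∑ v with Q i v, ∏ j, g (v j) - ∑ v : Fin s → R, ∏ j, g (v j) ∈ P :=
    sum_sum_filter_sub_sum_mem (P := P.toAddSubmonoid)
      (fun v ↦ P.prod_mem fun i _ ↦ hg (v i)) hcover
  simp only [Fintype.sum_sum_type, Fintype.sum_prod_type, hdistinct, hrepeated, Finset.sum_const,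
    Finset.card_univ, Fintype.card_embedding_eq, Fintype.card_fin, nsmul_eq_mul, ← Finset.sum_mul,
    ← Fintype.sum_pow] at hunion
  simpa only [conditionedSum, Finset.sum_mul, mul_assoc] using hunion

/-! ### Lifting residue classes -/

lemma card_filter_Icc_modEq {q : ℤ} (hq : 0 < q) (x : ℤ) (n : ℕ) :
    #{y ∈ Finset.Icc 1 (q * n) | y ≡ x [ZMOD q]} = n := by
  have hcard := Int.Ioc_filter_modEq_card 0 (q * n) hq x
  have hq' : (q : ℚ) ≠ 0 := by exact_mod_cast hq.ne'
  have hshift : ((q * n : ℤ) - x : ℚ) / q = ((0 : ℤ) - x) / q + n := by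
    push_cast
    field_simp
    ring
  rw [hshift, Int.floor_add_natCast, add_sub_cancel_left, max_eq_left n.cast_nonneg] at hcard
  have hIcc : Finset.Icc 1 (q * n) = Finset.Ioc 0 (q * n) := by
    ext
    simp [Int.lt_iff_add_one_le]
  rw [hIcc]
  exact_mod_cast hcard

/-- The residues modulo `p ^ (c + 1)` lifting the class of `ξ` modulo `p ^ c`, represented in
`[1, p ^ (c + 1)]`. -/
def residueLifts (p c : ℕ) (ξ : ℤ) : Finset ℤ :=
  {ρ ∈ Finset.Icc 1 ((p : ℤ) ^ (c + 1)) | ρ ≡ ξ [ZMOD (p : ℤ) ^ c]}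

lemma mem_residueLifts {p c : ℕ} {ξ ρ : ℤ} :
    ρ ∈ residueLifts p c ξ ↔ (1 ≤ ρ ∧ ρ ≤ (p : ℤ) ^ (c + 1)) ∧ ρ ≡ ξ [ZMOD (p : ℤ) ^ c] := by
  rw [residueLifts, Finset.mem_filter, Finset.mem_Icc]

lemma card_residueLifts {p : ℕ} (hp : 0 < p) (c : ℕ) (ξ : ℤ) : #(residueLifts p c ξ) = p := by
  rw [residueLifts, pow_succ, card_filter_Icc_modEq (by positivity)]

lemma intCast_injOn_residueLifts (p c : ℕ) (ξ : ℤ) :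
    Set.InjOn (Int.cast : ℤ → ZMod (p ^ (c + 1))) (residueLifts p c ξ) := by
  intro x hx y hy hxy
  rw [Finset.mem_coe, mem_residueLifts] at hx hy
  rw [ZMod.intCast_eq_intCast_iff_dvd_sub, Nat.cast_pow] at hxy
  exact (sub_eq_zero.1 (Int.eq_zero_of_abs_lt_dvd hxy (abs_lt.2 ⟨by omega, by omega⟩))).symm

lemma XiSet_eq_range (p r c : ℕ) (ξ : ℤ) :
    XiSet p r c ξ = Set.range fun (u : Fin r ↪ residueLifts p c ξ) i ↦ (u i : ℤ) := by
  ext v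
  constructor
  · rintro ⟨hbound, hmod, hinj⟩
    exact ⟨⟨fun i ↦ ⟨v i, mem_residueLifts.2 ⟨hbound i, hmod i⟩⟩,
      fun i j h ↦ hinj (congrArg (Int.cast ∘ Subtype.val) h)⟩, rfl⟩
  · rintro ⟨u, rfl⟩
    have hu i := mem_residueLifts.1 (u i).2
    exact ⟨fun i ↦ (hu i).1, fun i ↦ (hu i).2, fun i j h ↦ u.injective <| Subtype.ext <|
      intCast_injOn_residueLifts p c ξ (u i).2 (u j).2 h⟩

lemma Fexp_eq_conditionedSum (k p r : ℕ) (X : ℝ) (c : ℕ) (ξ : ℤ) :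
    Fexp k p r X c ξ =
      conditionedSum (fun ρ : residueLifts p c ξ ↦ fexp k p X (c + 1) ρ) r := by
  have hinj : Function.Injective fun (u : Fin r ↪ residueLifts p c ξ) i ↦ (u i : ℤ) :=
    fun u v h ↦ DFunLike.ext _ _ fun i ↦ Subtype.ext (congrFun h i)
  ext α
  simp only [Fexp, XiSet_eq_range, finsum_mem_range hinj, finsum_eq_sum_of_fintype,
    conditionedSum, Finset.sum_apply, Finset.prod_apply]

lemma sum_fexp_residueLifts (k : ℕ) {p : ℕ} (hp : 0 < p) (X : ℝ) (c : ℕ) (ξ : ℤ) :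
    ∑ ρ : residueLifts p c ξ, fexp k p X (c + 1) ρ = fexp k p X c ξ := by
  have hdvd : (p : ℤ) ^ c ∣ (p : ℤ) ^ (c + 1) := pow_dvd_pow _ (Nat.le_succ c)
  have hunique (x : ℤ) : #{ρ ∈ Finset.Icc 1 ((p : ℤ) ^ (c + 1)) | ρ ≡ x [ZMOD (p : ℤ) ^ (c + 1)]} =
      1 := by
    simpa using card_filter_Icc_modEq (q := (p : ℤ) ^ (c + 1)) (by positivity) x 1
  rw [Finset.sum_coe_sort (residueLifts p c ξ) (fexp k p X (c + 1))]
  simp only [fexp_eq_sum_trigChar]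
  rw [Finset.sum_comm' (t' := ({x ∈ Finset.Icc 1 ⌊X⌋ | x ≡ ξ [ZMOD (p : ℤ) ^ c]} : Finset ℤ))
    (s' := fun x ↦ ({ρ ∈ Finset.Icc 1 ((p : ℤ) ^ (c + 1)) | ρ ≡ x [ZMOD (p : ℤ) ^ (c + 1)]} :
      Finset ℤ))]
  · simp only [Finset.sum_const, hunique, one_smul]
  · intro ρ x
    simp only [mem_residueLifts, Finset.mem_filter, Finset.mem_Icc]
    constructor
    · rintro ⟨⟨hρ, hρξ⟩, hx, hxρ⟩
      exact ⟨⟨hρ, hxρ.symm⟩, hx, (hxρ.of_dvd hdvd).trans hρξ⟩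
    · rintro ⟨⟨hρ, hρx⟩, hx, hxξ⟩
      exact ⟨⟨hρ, (hρx.of_dvd hdvd).trans hxξ⟩, hx, hρx.symm⟩

lemma fexp_mem_posTrig (k p : ℕ) (X : ℝ) (c : ℕ) (ξ : ℤ) : fexp k p X c ξ ∈ posTrig k := by
  rw [fexp_eq_sum_trigChar]
  exact sum_mem fun x _ ↦ trigChar_mem_posTrig _

lemma Fexp_mem_posTrig (k p r : ℕ) (X : ℝ) (c : ℕ) (ξ : ℤ) : Fexp k p r X c ξ ∈ posTrig k := by
  rw [Fexp_eq_conditionedSum]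
  exact conditionedSum_mem (fun ρ : residueLifts p c ξ ↦ fexp_mem_posTrig k p X (c + 1) ρ) r

lemma fexp_pow_sub_Fexp_mem_posTrig (k : ℕ) {p : ℕ} (hp : 0 < p) (r : ℕ) (X : ℝ) (c : ℕ) (ξ : ℤ) :
    fexp k p X c ξ ^ r - Fexp k p r X c ξ ∈ posTrig k := by
  rw [Fexp_eq_conditionedSum, ← sum_fexp_residueLifts k hp]
  exact sum_pow_sub_conditionedSum_mem
    (fun ρ : residueLifts p c ξ ↦ fexp_mem_posTrig k p X (c + 1) ρ) r

/-! ### The conditioning inequality -/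

lemma pow_mul_pow_le_young {x y c : ℝ} (hx : 0 ≤ x) (hy : 0 ≤ y) (hc : 0 < c) (m n : ℕ) :
    x ^ m * y ^ n ≤ c⁻¹ ^ m * y ^ (m + n) + c ^ n * x ^ (m + n) := by
  rcases le_total (c * x) y with h | h
  · have hxy : x ≤ c⁻¹ * y := by rwa [le_inv_mul_iff₀ hc]
    calc x ^ m * y ^ n ≤ (c⁻¹ * y) ^ m * y ^ n := by gcongr
      _ = c⁻¹ ^ m * y ^ (m + n) := by ring
      _ ≤ _ := le_add_of_nonneg_right (by positivity)
  · calc x ^ m * y ^ n ≤ x ^ m * (c * x) ^ n := by gcongr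
      _ = c ^ n * x ^ (m + n) := by ring
      _ ≤ _ := le_add_of_nonneg_left (by positivity)

lemma distinct_term_le {F f L E : ℝ} (hF : 0 ≤ F) (hf : 0 ≤ f) (hL : 0 ≤ L) (hE : 1 ≤ E)
    (hLE : 2 * L ≤ E) {r t : ℕ} (hr : 1 ≤ r) (ht : 1 ≤ t) :
    L * (f ^ (r * t) * (F * f ^ (r * t - r))) ≤
      L / E * f ^ (2 * (r * t)) + E ^ (2 * (r * t)) / 2 * F ^ (2 * t) := by
  have hcoef : L * E ^ (2 * t - 1) ≤ E ^ (2 * (r * t)) / 2 := by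
    calc L * E ^ (2 * t - 1) ≤ E / 2 * E ^ (2 * t - 1) := by gcongr; linarith
      _ = E ^ (2 * t - 1 + 1) / 2 := by ring
      _ ≤ E ^ (2 * (r * t)) / 2 := by
          gcongr
          have := Nat.le_mul_of_pos_left t hr
          omega
  calc L * (f ^ (r * t) * (F * f ^ (r * t - r)))
      = L * (F ^ 1 * (f ^ r) ^ (2 * t - 1)) := by
        obtain ⟨n, rfl⟩ := Nat.exists_eq_add_of_le' ht
        rw [show r * (n + 1) - r = r * n by simp [mul_add],
          show 2 * (n + 1) - 1 = 2 * n + 1 by omega]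
        ring
    _ ≤ L * (E⁻¹ ^ 1 * (f ^ r) ^ (1 + (2 * t - 1)) + E ^ (2 * t - 1) * F ^ (1 + (2 * t - 1))) := by
        gcongr
        exact pow_mul_pow_le_young hF (pow_nonneg hf r) (by linarith) 1 (2 * t - 1)
    _ = L / E * f ^ (2 * (r * t)) + L * E ^ (2 * t - 1) * F ^ (2 * t) := by
        rw [show 1 + (2 * t - 1) = 2 * t by omega]
        ring
    _ ≤ _ := by gcongr

lemma repeated_term_le {R : Type*} [Fintype R] {f L E q : ℝ} {x : R → ℝ} (hx : ∀ ρ, 0 ≤ x ρ)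
    (hf : 0 ≤ f) (hL : 0 ≤ L) (hE : 1 ≤ E) (hLE : 2 * L ≤ E) (hq : 0 < q)
    (hcard : Fintype.card R ≤ q ^ 3) {s : ℕ} (hs : 3 ≤ s) :
    L * (f ^ s * ∑ ρ, x ρ ^ 3 * f ^ (s - 3)) ≤
      L / E * f ^ (2 * s) + E ^ (2 * s) / 2 * (q ^ (2 * s - 3) * ∑ ρ, x ρ ^ (2 * s)) := by
  have hE0 : 0 < E := by linarith
  have hexp : 3 + (2 * s - 3) = 2 * s := by omega
  have hcoef₁ : Fintype.card R * (E * q)⁻¹ ^ 3 ≤ E⁻¹ := by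
    calc Fintype.card R * (E * q)⁻¹ ^ 3 ≤ q ^ 3 * (E * q)⁻¹ ^ 3 := by gcongr
      _ = E⁻¹ ^ 3 := by field_simp
      _ ≤ E⁻¹ := pow_le_of_le_one (by positivity) (inv_le_one_of_one_le₀ hE) three_ne_zero
  have hcoef₂ : L * (E * q) ^ (2 * s - 3) ≤ E ^ (2 * s) / 2 * q ^ (2 * s - 3) := by
    calc L * (E * q) ^ (2 * s - 3) ≤ E ^ 3 / 2 * (E * q) ^ (2 * s - 3) := by
          gcongr
          linarith [le_self_pow₀ hE three_ne_zero]
      _ = E ^ (3 + (2 * s - 3)) / 2 * q ^ (2 * s - 3) := by rw [mul_pow, pow_add]; ring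
      _ = _ := by rw [hexp]
  calc L * (f ^ s * ∑ ρ, x ρ ^ 3 * f ^ (s - 3))
      = L * ∑ ρ, x ρ ^ 3 * f ^ (2 * s - 3) := by
        rw [show 2 * s - 3 = s + (s - 3) by omega, pow_add, Finset.mul_sum]
        simp_rw [mul_left_comm]
    _ ≤ L * ∑ ρ, ((E * q)⁻¹ ^ 3 * f ^ (2 * s) + (E * q) ^ (2 * s - 3) * x ρ ^ (2 * s)) := by
        gcongr with ρ
        simpa only [hexp] using pow_mul_pow_le_young (hx ρ) hf (mul_pos hE0 hq) 3 (2 * s - 3)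
    _ = L * (Fintype.card R * (E * q)⁻¹ ^ 3) * f ^ (2 * s) +
          L * (E * q) ^ (2 * s - 3) * ∑ ρ, x ρ ^ (2 * s) := by
        simp only [Finset.sum_add_distrib, Finset.sum_const, Finset.card_univ, nsmul_eq_mul,
          ← Finset.mul_sum]
        ring
    _ ≤ L * E⁻¹ * f ^ (2 * s) + E ^ (2 * s) / 2 * q ^ (2 * s - 3) * ∑ ρ, x ρ ^ (2 * s) := by
        have := Finset.sum_nonneg fun ρ (_ : ρ ∈ univ) ↦ pow_nonneg (hx ρ) (2 * s)
        gcongr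
    _ = _ := by ring

lemma re_mul_star_mul_star_pow_mul_pow (z w : ℂ) (n : ℕ) :
    (z * star z * star w ^ n * w ^ n).re = ‖z‖ ^ 2 * ‖w‖ ^ (2 * n) := by
  rw [mul_assoc, ← mul_pow, mul_comm (star w), Complex.star_def, Complex.mul_conj',
    Complex.mul_conj', ← pow_mul]
  norm_cast

lemma integral_le_integral_conditionedSum {k : ℕ} {R : Type*} [Fintype R]
    {G : (Fin k → ℝ) → ℂ} {g : R → (Fin k → ℝ) → ℂ} (hG : G ∈ posTrig k)
    (hg : ∀ ρ, g ρ ∈ posTrig k) {m r s : ℕ} (hm : 0 < m) (hmr : m * r ≤ s) :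
    ∫ α in box k, ‖G α‖ ^ 2 * ‖(∑ ρ, g ρ) α‖ ^ (2 * s) ≤
      ∫ α in box k, ‖G α‖ ^ 2 * (‖(∑ ρ, g ρ) α‖ ^ s *
        (s.descFactorial r * (‖conditionedSum g r α‖ * ‖(∑ ρ, g ρ) α‖ ^ (s - r)) +
          s.descFactorial (m + 1) *
            ∑ ρ, ‖g ρ α‖ ^ (m + 1) * ‖(∑ ρ, g ρ) α‖ ^ (s - (m + 1)))) := by
  have hF : Continuous (conditionedSum g r) := continuous_of_mem_posTrig (conditionedSum_mem hg r)
  set F := conditionedSum g r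
  set f := ∑ ρ, g ρ
  have hf : f ∈ posTrig k := sum_mem fun ρ _ ↦ hg ρ
  have hcontf : Continuous f := continuous_of_mem_posTrig hf
  have hcontG : Continuous G := continuous_of_mem_posTrig hG
  have hcontg ρ : Continuous (g ρ) := continuous_of_mem_posTrig (hg ρ)
  set Φ : (Fin k → ℝ) → ℂ := s.descFactorial r * (F * f ^ (s - r)) +
    s.descFactorial (m + 1) * ∑ ρ, g ρ ^ (m + 1) * f ^ (s - (m + 1)) with hΦ
  set W : (Fin k → ℝ) → ℂ := G * star G * star f ^ s with hW_def
  have hW : W ∈ posTrig k :=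
    mul_mem (mul_mem hG (star_mem_posTrig hG)) (pow_mem (star_mem_posTrig hf) s)
  have hWf : W * f ^ s ∈ posTrig k := mul_mem hW (pow_mem hf s)
  have hdom : W * Φ - W * f ^ s ∈ posTrig k := by
    rw [← mul_sub]
    exact mul_mem hW (conditionedSum_add_sum_pow_sub_sum_pow_mem hg hm hmr)
  have hWΦ : Continuous (W * Φ) :=
    continuous_of_mem_posTrig (sub_add_cancel (W * Φ) (W * f ^ s) ▸ add_mem hdom hWf)
  calc ∫ α in box k, ‖G α‖ ^ 2 * ‖f α‖ ^ (2 * s)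
      = ∫ α in box k, ((W * f ^ s) α).re := by
        simp only [hW_def, Pi.mul_apply, Pi.pow_apply, Pi.star_apply,
          re_mul_star_mul_star_pow_mul_pow]
    _ ≤ ∫ α in box k, ((W * Φ) α).re :=
        integral_re_le_of_sub_mem_posTrig (continuous_of_mem_posTrig hWf) hdom
    _ ≤ _ := by
        refine integral_mono (integrableOn_box (Complex.continuous_re.comp hWΦ))
          (integrableOn_box (by fun_prop)) fun α ↦ (Complex.re_le_norm _).trans ?_
        simp only [hW_def, hΦ, Pi.mul_apply, Pi.pow_apply, Pi.star_apply, Pi.add_apply,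
          Finset.sum_apply, Pi.natCast_apply, norm_mul, norm_pow, norm_star, ← sq]
        rw [mul_assoc]
        gcongr
        refine (norm_add_le _ _).trans ?_
        simp only [norm_mul, norm_pow, Complex.norm_natCast]
        gcongr
        exact (norm_sum_le _ _).trans_eq (by simp only [norm_mul, norm_pow])

/-- The implied constant of the conditioning inequality: a power of a weight with which Young's
inequality returns at most half of the integral being estimated. -/
def conditioningConst (r t : ℕ) : ℝ :=
  (2 * ((r * t).descFactorial r + (r * t).descFactorial 3) + 1) ^ (2 * (r * t))

lemma one_le_conditioningConst (r t : ℕ) : 1 ≤ conditioningConst r t :=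
  one_le_pow₀ (le_add_of_nonneg_left (by positivity))

lemma distinct_add_repeated_le {R : Type*} [Fintype R] {F f q : ℝ} {x : R → ℝ} (hF : 0 ≤ F)
    (hf : 0 ≤ f) (hx : ∀ ρ, 0 ≤ x ρ) (hq : 0 < q) (hcard : Fintype.card R ≤ q ^ 3) {r t : ℕ}
    (hr : 1 ≤ r) (ht : 1 ≤ t) :
    f ^ (r * t) * ((r * t).descFactorial r * (F * f ^ (r * t - r)) +
        (r * t).descFactorial 3 * ∑ ρ, x ρ ^ 3 * f ^ (r * t - 3)) ≤
      f ^ (2 * (r * t)) / 2 + conditioningConst r t / 2 *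
        (F ^ (2 * t) + q ^ (2 * (r * t) - 3) * ∑ ρ, x ρ ^ (2 * (r * t))) := by
  set s := r * t
  set L₁ : ℝ := (s.descFactorial r : ℝ)
  set L₂ : ℝ := (s.descFactorial 3 : ℝ) with hL₂_def
  have hL₁ : 0 ≤ L₁ := Nat.cast_nonneg _
  have hL₂ : 0 ≤ L₂ := Nat.cast_nonneg _
  set E := 2 * (L₁ + L₂) + 1
  have hE : 1 ≤ E := by linarith
  have hsum : 0 ≤ ∑ ρ, x ρ ^ (2 * s) := Finset.sum_nonneg fun ρ _ ↦ pow_nonneg (hx ρ) _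
  have hdistinct := distinct_term_le hF hf hL₁ hE (by linarith) hr ht
  have hrepeated : L₂ * (f ^ s * ∑ ρ, x ρ ^ 3 * f ^ (s - 3)) ≤
      L₂ / E * f ^ (2 * s) + E ^ (2 * s) / 2 * (q ^ (2 * s - 3) * ∑ ρ, x ρ ^ (2 * s)) := by
    rcases lt_or_ge s 3 with hs3 | hs3
    · rw [hL₂_def, Nat.descFactorial_of_lt hs3, Nat.cast_zero]
      simp only [zero_mul, zero_div, zero_add]
      positivity
    · exact repeated_term_le hx hf hL₂ hE (by linarith) hq hcard hs3
  have hhalf : (L₁ + L₂) / E ≤ 1 / 2 := by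
    rw [div_le_div_iff₀ (by linarith) two_pos]
    linarith
  calc f ^ s * (L₁ * (F * f ^ (s - r)) + L₂ * ∑ ρ, x ρ ^ 3 * f ^ (s - 3))
      = L₁ * (f ^ s * (F * f ^ (s - r))) + L₂ * (f ^ s * ∑ ρ, x ρ ^ 3 * f ^ (s - 3)) := by ring
    _ ≤ (L₁ + L₂) / E * f ^ (2 * s) + E ^ (2 * s) / 2 *
          (F ^ (2 * t) + q ^ (2 * s - 3) * ∑ ρ, x ρ ^ (2 * s)) :=
        (add_le_add hdistinct hrepeated).trans_eq (by ring)
    _ ≤ _ := by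
        rw [div_eq_mul_one_div (f ^ (2 * s)), mul_comm (f ^ (2 * s)),
          show conditioningConst r t = E ^ (2 * s) from rfl]
        gcongr

lemma integral_le_conditioningConst_mul_sum {k : ℕ} {R : Type*} [Fintype R] {G : (Fin k → ℝ) → ℂ}
    {g : R → (Fin k → ℝ) → ℂ} (hG : G ∈ posTrig k) (hg : ∀ ρ, g ρ ∈ posTrig k) {r t : ℕ}
    (hr : 1 ≤ r) (ht : 2 ≤ t) {q : ℝ} (hq : 0 < q) (hcard : Fintype.card R ≤ q ^ 3) :
    ∫ α in box k, ‖G α‖ ^ 2 * ‖(∑ ρ, g ρ) α‖ ^ (2 * (r * t)) ≤ conditioningConst r t *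
      ((∫ α in box k, ‖G α‖ ^ 2 * ‖conditionedSum g r α‖ ^ (2 * t)) +
        q ^ (2 * (r * t) - 3) * ∑ ρ, ∫ α in box k, ‖G α‖ ^ 2 * ‖g ρ α‖ ^ (2 * (r * t))) := by
  have hmul : 2 * r ≤ r * t := by nlinarith
  have hpigeonhole := integral_le_integral_conditionedSum hG hg two_pos hmul
  have hcontF : Continuous (conditionedSum g r) :=
    continuous_of_mem_posTrig (conditionedSum_mem hg r)
  have hcontf : Continuous (∑ ρ, g ρ) := continuous_of_mem_posTrig (sum_mem fun ρ _ ↦ hg ρ)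
  have hcontG : Continuous G := continuous_of_mem_posTrig hG
  have hcontg ρ : Continuous (g ρ) := continuous_of_mem_posTrig (hg ρ)
  have hint {φ : (Fin k → ℝ) → ℝ} (hφ : Continuous φ) : IntegrableOn φ (box k) :=
    integrableOn_box hφ
  set C := conditioningConst r t
  set F := conditionedSum g r
  set f := ∑ ρ, g ρ
  have hhalf : ∫ α in box k, ‖G α‖ ^ 2 * ‖f α‖ ^ (2 * (r * t)) ≤
      ∫ α in box k, (‖G α‖ ^ 2 * ‖f α‖ ^ (2 * (r * t)) / 2 +
        C / 2 * (‖G α‖ ^ 2 * ‖F α‖ ^ (2 * t) +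
          q ^ (2 * (r * t) - 3) * ∑ ρ, ‖G α‖ ^ 2 * ‖g ρ α‖ ^ (2 * (r * t)))) := by
    refine hpigeonhole.trans
      (integral_mono (hint (by fun_prop)) (hint (by fun_prop)) fun α ↦ ?_)
    refine (mul_le_mul_of_nonneg_left (distinct_add_repeated_le (norm_nonneg _) (norm_nonneg _)
      (fun ρ ↦ norm_nonneg (g ρ α)) hq hcard hr (by omega)) (by positivity)).trans_eq ?_
    rw [← Finset.mul_sum]
    ring
  rw [integral_add (hint (by fun_prop)) (hint (by fun_prop)), integral_div, integral_const_mul,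
    integral_add (hint (by fun_prop)) (hint (by fun_prop)), integral_const_mul,
    integral_finsetSum _ fun ρ _ ↦ hint (by fun_prop)] at hhalf
  linarith

lemma integral_le_conditioningConst_mul {k : ℕ} {R : Type*} [Fintype R] {G : (Fin k → ℝ) → ℂ}
    {g : R → (Fin k → ℝ) → ℂ} (hG : G ∈ posTrig k) (hg : ∀ ρ, g ρ ∈ posTrig k) {r t : ℕ}
    (hr : 1 ≤ r) (ht : 2 ≤ t) {q B : ℝ} (hq : 0 < q) (hcard : Fintype.card R ≤ q ^ 3)
    (hB : 0 ≤ B) (hgB : ∀ ρ, ∫ α in box k, ‖G α‖ ^ 2 * ‖g ρ α‖ ^ (2 * (r * t)) ≤ B) :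
    ∫ α in box k, ‖G α‖ ^ 2 * ‖(∑ ρ, g ρ) α‖ ^ (2 * (r * t)) ≤ conditioningConst r t *
      ((∫ α in box k, ‖G α‖ ^ 2 * ‖conditionedSum g r α‖ ^ (2 * t)) + q ^ (2 * (r * t)) * B) := by
  have hs : 2 ≤ r * t := ht.trans (Nat.le_mul_of_pos_left t hr)
  refine (integral_le_conditioningConst_mul_sum hG hg hr ht hq hcard).trans ?_
  have hC : 0 ≤ conditioningConst r t := zero_le_one.trans (one_le_conditioningConst r t)
  gcongr _ * (_ + ?_)
  calc q ^ (2 * (r * t) - 3) * ∑ ρ, ∫ α in box k, ‖G α‖ ^ 2 * ‖g ρ α‖ ^ (2 * (r * t))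
      ≤ q ^ (2 * (r * t) - 3) * (Fintype.card R * B) := by
        gcongr
        exact (Finset.sum_le_card_nsmul _ _ _ fun ρ _ ↦ hgB ρ).trans_eq (by simp)
    _ ≤ q ^ (2 * (r * t) - 3) * (q ^ 3 * B) := by gcongr
    _ = q ^ (2 * (r * t)) * B := by rw [← mul_assoc, ← pow_add, Nat.sub_add_cancel (by omega)]

/-! ### Iteration of the conditioning step -/

lemma Iab_nonneg (k p r s : ℕ) (X : ℝ) (a b : ℕ) (ξ η : ℤ) : 0 ≤ Iab k p r s X a b ξ η :=
  integral_nonneg fun _ ↦ by positivity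

lemma Kab_nonneg (k p r t : ℕ) (X : ℝ) (a b : ℕ) (ξ η : ℤ) : 0 ≤ Kab k p r t X a b ξ η :=
  integral_nonneg fun _ ↦ by positivity

lemma bddAbove_residue_pairs (f : ℤ → ℤ → ℝ) (A B : ℤ) (Q : ℤ → ℤ → Prop) :
    BddAbove {v | ∃ ξ η : ℤ, 1 ≤ ξ ∧ ξ ≤ A ∧ 1 ≤ η ∧ η ≤ B ∧ Q ξ η ∧ v = f ξ η} := by
  refine (((Set.finite_Icc 1 A).image2 f (Set.finite_Icc 1 B)).subset ?_).bddAbove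
  rintro _ ⟨ξ, η, hξ, hξA, hη, hηB, -, rfl⟩
  exact Set.mem_image2_of_mem ⟨hξ, hξA⟩ ⟨hη, hηB⟩

lemma Imax_nonneg (k p r s : ℕ) (X : ℝ) (a b : ℕ) : 0 ≤ Imax k p r s X a b := by
  refine Real.sSup_nonneg ?_
  rintro _ ⟨ξ, η, -, -, -, -, -, rfl⟩
  exact Iab_nonneg k p r s X a b ξ η

lemma Iab_le_Imax {k p r s : ℕ} {X : ℝ} {a b : ℕ} {ξ η : ℤ} (hξ : 1 ≤ ξ) (hξp : ξ ≤ (p : ℤ) ^ a)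
    (hη : 1 ≤ η) (hηp : η ≤ (p : ℤ) ^ b) (hne : ¬η ≡ ξ [ZMOD p]) :
    Iab k p r s X a b ξ η ≤ Imax k p r s X a b :=
  le_csSup (bddAbove_residue_pairs (Iab k p r s X a b) _ _ fun ξ η ↦ ¬η ≡ ξ [ZMOD p])
    ⟨ξ, η, hξ, hξp, hη, hηp, hne, rfl⟩

lemma Kmax_nonneg (k p r t : ℕ) (X : ℝ) {a : ℕ} (ha : a ≠ 0) (b : ℕ) :
    0 ≤ Kmax k p r t X a b := by
  rw [Kmax, if_neg ha]
  refine Real.sSup_nonneg ?_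
  rintro _ ⟨ξ, η, -, -, -, -, -, rfl⟩
  exact Kab_nonneg k p r t X a b ξ η

lemma Kab_le_Kmax {k p r t : ℕ} {X : ℝ} {a b : ℕ} {ξ η : ℤ} (ha : a ≠ 0) (hξ : 1 ≤ ξ)
    (hξp : ξ ≤ (p : ℤ) ^ a) (hη : 1 ≤ η) (hηp : η ≤ (p : ℤ) ^ b) (hne : ¬η ≡ ξ [ZMOD p]) :
    Kab k p r t X a b ξ η ≤ Kmax k p r t X a b := by
  rw [Kmax, if_neg ha]
  exact le_csSup (bddAbove_residue_pairs (Kab k p r t X a b) _ _ fun ξ η ↦ ¬η ≡ ξ [ZMOD p])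
    ⟨ξ, η, hξ, hξp, hη, hηp, hne, rfl⟩

lemma Iab_le_conditioningConst_mul {k p r t : ℕ} (hp : 0 < p) (hr : 1 ≤ r) (ht : 2 ≤ t) {X : ℝ}
    {a b : ℕ} {ξ η : ℤ} {B : ℝ} (hB : 0 ≤ B)
    (hIB : ∀ ρ ∈ residueLifts p b η, Iab k p r (r * t) X a (b + 1) ξ ρ ≤ B) :
    Iab k p r (r * t) X a b ξ η ≤ conditioningConst r t *
      (Kab k p r t X a b ξ η + (p : ℝ) ^ (2 * ((r * t : ℕ) : ℝ) / 3) * B) := by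
  have hcube : ((p : ℝ) ^ (1 / 3 : ℝ)) ^ 3 = p := by
    rw [← Real.rpow_mul_natCast p.cast_nonneg]
    norm_num
  have hpow : ((p : ℝ) ^ (1 / 3 : ℝ)) ^ (2 * (r * t)) = (p : ℝ) ^ (2 * ((r * t : ℕ) : ℝ) / 3) := by
    rw [← Real.rpow_mul_natCast p.cast_nonneg]
    push_cast
    ring_nf
  have hcond := integral_le_conditioningConst_mul (R := residueLifts p b η)
    (g := fun ρ ↦ fexp k p X (b + 1) ρ) (Fexp_mem_posTrig k p r X a ξ)
    (fun ρ ↦ fexp_mem_posTrig k p X (b + 1) ρ) hr ht (q := (p : ℝ) ^ (1 / 3 : ℝ)) (by positivity)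
    (by rw [hcube, Fintype.card_coe, card_residueLifts hp]) hB fun ρ ↦ hIB ρ ρ.2
  rwa [sum_fexp_residueLifts k hp, ← Fexp_eq_conditionedSum, hpow] at hcond

lemma Imax_le_conditioningConst_mul (k : ℕ) {p r t : ℕ} (hp : 0 < p) (hr : 1 ≤ r) (ht : 2 ≤ t)
    (X : ℝ) {a b : ℕ} (ha : a ≠ 0) (hb : b ≠ 0) :
    Imax k p r (r * t) X a b ≤ conditioningConst r t * (Kmax k p r t X a b +
      (p : ℝ) ^ (2 * ((r * t : ℕ) : ℝ) / 3) * Imax k p r (r * t) X a (b + 1)) := by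
  have hC : 0 ≤ conditioningConst r t := zero_le_one.trans (one_le_conditioningConst r t)
  have hI := Imax_nonneg k p r (r * t) X a (b + 1)
  have hK := Kmax_nonneg k p r t X ha b
  refine Real.sSup_le ?_ (by positivity)
  rintro _ ⟨ξ, η, hξ, hξp, hη, hηp, hne, rfl⟩
  refine (Iab_le_conditioningConst_mul hp hr ht hI fun ρ hρ ↦ ?_).trans ?_
  · obtain ⟨⟨hρ1, hρp⟩, hρη⟩ := mem_residueLifts.1 hρ
    exact Iab_le_Imax hξ hξp hρ1 hρp fun hρξ ↦
      hne ((hρη.of_dvd (dvd_pow_self _ hb)).symm.trans hρξ)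
  · gcongr
    exact Kab_le_Kmax ha hξ hξp hη hηp hne

lemma le_of_iterated_recursion {A K : ℕ → ℝ} {C Q : ℝ} (hC : 1 ≤ C) (hQ : 0 ≤ Q)
    (hK : ∀ n, 0 ≤ K n) (hrec : ∀ n, A n ≤ C * (K n + Q * A (n + 1))) (n : ℕ) :
    A 0 ≤ C ^ n * (∑ j ∈ Finset.range n, Q ^ j * K j + Q ^ n * A n) := by
  induction n with
  | zero => simp
  | succ n ih =>
    have hsum : 0 ≤ ∑ j ∈ Finset.range n, Q ^ j * K j :=
      Finset.sum_nonneg fun j _ ↦ mul_nonneg (pow_nonneg hQ j) (hK j)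
    calc A 0 ≤ C ^ n * (∑ j ∈ Finset.range n, Q ^ j * K j + Q ^ n * A n) := ih
      _ ≤ C ^ n * (C * ∑ j ∈ Finset.range n, Q ^ j * K j +
            Q ^ n * (C * (K n + Q * A (n + 1)))) := by
          gcongr
          · exact le_mul_of_one_le_left hsum hC
          · exact hrec n
      _ = _ := by
          rw [Finset.sum_range_succ]
          ring

lemma exists_le_of_iterated_recursion {A K : ℕ → ℝ} {C Q : ℝ} (hC : 1 ≤ C) (hQ : 0 ≤ Q)
    (hK : ∀ n, 0 ≤ K n) (hrec : ∀ n, A n ≤ C * (K n + Q * A (n + 1))) {n : ℕ} (hn : 0 < n) :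
    ∃ h < n, A 0 ≤ C ^ n * (n * (Q ^ h * K h) + Q ^ n * A n) := by
  obtain ⟨h, hh, hmax⟩ := Finset.exists_max_image (Finset.range n) (fun j ↦ Q ^ j * K j)
    ⟨0, Finset.mem_range.2 hn⟩
  refine ⟨h, Finset.mem_range.1 hh, (le_of_iterated_recursion hC hQ hK hrec n).trans ?_⟩
  gcongr
  exact (Finset.sum_le_card_nsmul _ _ _ hmax).trans_eq (by simp)

/-- The implied constant of one step of the iteration when `p ≤ 2M`. -/
def iterationConst (r t : ℕ) : ℝ :=
  conditioningConst r t * 2 ^ (2 * ((r * t : ℕ) : ℝ) / 3)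

lemma one_le_iterationConst (r t : ℕ) : 1 ≤ iterationConst r t :=
  one_le_mul_of_one_le_of_one_le (one_le_conditioningConst r t)
    (Real.one_le_rpow one_le_two (by positivity))

lemma Imax_le_iterationConst_mul (k : ℕ) {p r t : ℕ} (hp : 0 < p) (hr : 1 ≤ r) (ht : 2 ≤ t)
    (X : ℝ) {a b : ℕ} (ha : a ≠ 0) (hb : b ≠ 0) {M : ℝ} (hM : 0 ≤ M) (hpM : p ≤ 2 * M) :
    Imax k p r (r * t) X a b ≤ iterationConst r t * (Kmax k p r t X a b +
      M ^ (2 * ((r * t : ℕ) : ℝ) / 3) * Imax k p r (r * t) X a (b + 1)) := by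
  have hC : 0 ≤ conditioningConst r t := zero_le_one.trans (one_le_conditioningConst r t)
  have hI := Imax_nonneg k p r (r * t) X a (b + 1)
  have hK := Kmax_nonneg k p r t X ha b
  set σ : ℝ := 2 * ((r * t : ℕ) : ℝ) / 3
  have hσ0 : 0 ≤ σ := by positivity
  calc Imax k p r (r * t) X a b
      ≤ conditioningConst r t *
          (Kmax k p r t X a b + (p : ℝ) ^ σ * Imax k p r (r * t) X a (b + 1)) :=
        Imax_le_conditioningConst_mul k hp hr ht X ha hb
    _ ≤ conditioningConst r t *
          (2 ^ σ * Kmax k p r t X a b + (2 * M) ^ σ * Imax k p r (r * t) X a (b + 1)) := by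
        gcongr
        exact le_mul_of_one_le_left hK (Real.one_le_rpow one_le_two hσ0)
    _ = _ := by
        rw [Real.mul_rpow two_pos.le hM, iterationConst]
        ring

lemma exists_Imax_le_iterationConst_pow_mul (k : ℕ) {p r t : ℕ} (hp : 0 < p) (hr : 1 ≤ r)
    (ht : 2 ≤ t) (X : ℝ) {a b : ℕ} (ha : a ≠ 0) (hb : b ≠ 0) {M : ℝ} (hM : 0 ≤ M)
    (hpM : p ≤ 2 * M) {n : ℕ} (hn : 0 < n) :
    ∃ h < n, Imax k p r (r * t) X a b ≤ iterationConst r t ^ n *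
      (n * ((M ^ h) ^ (2 * ((r * t : ℕ) : ℝ) / 3) * Kmax k p r t X a (b + h)) +
        (M ^ n) ^ (2 * ((r * t : ℕ) : ℝ) / 3) * Imax k p r (r * t) X a (b + n)) := by
  simp only [← Real.rpow_pow_comm hM]
  exact exists_le_of_iterated_recursion (A := fun n ↦ Imax k p r (r * t) X a (b + n))
    (one_le_iterationConst r t) (by positivity) (fun n ↦ Kmax_nonneg k p r t X ha (b + n))
    (fun n ↦ Imax_le_iterationConst_mul k hp hr ht X ha (by omega) hM hpM) hn

/-! ### The terminal mean value -/

lemma integral_norm_Fexp_pow_le_Jcount (k : ℕ) {p : ℕ} (hp : 0 < p) (r u : ℕ) (X : ℝ) (c : ℕ)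
    (ξ : ℤ) :
    ∫ α in box k, ‖Fexp k p r X c ξ α‖ ^ (2 * u) ≤ Jcount (r * u) k (X / (p : ℝ) ^ c + 1) := by
  calc ∫ α in box k, ‖Fexp k p r X c ξ α‖ ^ (2 * u)
      ≤ ∫ α in box k, ‖(fexp k p X c ξ ^ r) α‖ ^ (2 * u) :=
        integral_norm_pow_le_of_sub_mem_posTrig (Fexp_mem_posTrig k p r X c ξ)
          (fexp_pow_sub_Fexp_mem_posTrig k hp r X c ξ) u
    _ = ∫ α in box k, ‖fexp k p X c ξ α‖ ^ (2 * (r * u)) := by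
        simp only [Pi.pow_apply, norm_pow, ← pow_mul, mul_left_comm r 2 u]
    _ ≤ _ := integral_norm_fexp_pow_le_Jcount k hp (r * u) X c ξ

lemma Iab_le_young {p : ℕ} (hp : 0 < p) (k r t : ℕ) (X : ℝ) (a b : ℕ) (ξ η : ℤ) {e : ℝ}
    (he : 0 < e) :
    Iab k p r (r * t) X a b ξ η ≤
      e⁻¹ * Jcount (r * (t + 1)) k (X / (p : ℝ) ^ b + 1) +
        e ^ t * Jcount (r * (t + 1)) k (X / (p : ℝ) ^ a + 1) := by
  have hF : Continuous (Fexp k p r X a ξ) :=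
    continuous_of_mem_posTrig (Fexp_mem_posTrig k p r X a ξ)
  have hf : Continuous (fexp k p X b η) := continuous_of_mem_posTrig (fexp_mem_posTrig k p X b η)
  have hint {φ : (Fin k → ℝ) → ℝ} (hφ : Continuous φ) : IntegrableOn φ (box k) :=
    integrableOn_box hφ
  have hyoung (α : Fin k → ℝ) :
      ‖Fexp k p r X a ξ α‖ ^ 2 * ‖fexp k p X b η α‖ ^ (2 * (r * t)) ≤
        e⁻¹ * ‖fexp k p X b η α‖ ^ (2 * (r * (t + 1))) +
          e ^ t * ‖Fexp k p r X a ξ α‖ ^ (2 * (t + 1)) := by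
    have h := pow_mul_pow_le_young (sq_nonneg ‖Fexp k p r X a ξ α‖)
      (pow_nonneg (norm_nonneg (fexp k p X b η α)) (2 * r)) he 1 t
    simpa only [pow_one, ← pow_mul, mul_assoc, add_comm 1 t] using h
  calc Iab k p r (r * t) X a b ξ η
      ≤ ∫ α in box k, (e⁻¹ * ‖fexp k p X b η α‖ ^ (2 * (r * (t + 1))) +
          e ^ t * ‖Fexp k p r X a ξ α‖ ^ (2 * (t + 1))) :=
        integral_mono (hint (by fun_prop)) (hint (by fun_prop)) hyoung
    _ = e⁻¹ * (∫ α in box k, ‖fexp k p X b η α‖ ^ (2 * (r * (t + 1)))) +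
          e ^ t * ∫ α in box k, ‖Fexp k p r X a ξ α‖ ^ (2 * (t + 1)) := by
        rw [integral_add (hint (by fun_prop)) (hint (by fun_prop)), integral_const_mul,
          integral_const_mul]
    _ ≤ _ := by
        gcongr
        · exact integral_norm_fexp_pow_le_Jcount k hp (r * (t + 1)) X b η
        · exact integral_norm_Fexp_pow_le_Jcount k hp r (t + 1) X a ξ

lemma exists_young_weight {W D : ℝ} (hW : 0 ≤ W) (hD : 0 < D) (L : ℝ) (t : ℕ) :
    ∃ e > 0, e⁻¹ * (W / D) ^ L + e ^ t * W ^ L = 2 * W ^ L * D ^ (-(L * t / (t + 1))) := by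
  have ht : (t : ℝ) + 1 ≠ 0 := by positivity
  refine ⟨D ^ (-(L / (t + 1))), by positivity, ?_⟩
  rw [Real.rpow_neg hD.le, inv_inv, Real.div_rpow hW hD.le, ← Real.rpow_neg hD.le,
    ← Real.rpow_mul_natCast hD.le, mul_div_left_comm, ← Real.rpow_sub hD,
    show L / (t + 1) - L = -(L * t / (t + 1)) by field_simp; ring,
    show -(L / (t + 1)) * t = -(L * t / (t + 1)) by ring]
  ring

lemma natCast_le_of_Jcount_lt_rpow {u k : ℕ} {Z L : ℝ}
    (hJ : ∀ Y, Z ≤ Y → (Jcount u k Y : ℝ) < Y ^ L) : (u : ℝ) ≤ L := by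
  set n : ℕ := max 2 ⌈Z⌉₊
  have hn : (1 : ℝ) < n := by exact_mod_cast one_lt_two.trans_le (le_max_left 2 ⌈Z⌉₊)
  have hZ : Z ≤ n := (Nat.le_ceil Z).trans (Nat.cast_le.2 (le_max_right 2 ⌈Z⌉₊))
  have hpow : (n : ℝ) ^ (u : ℝ) < (n : ℝ) ^ L := by
    refine lt_of_le_of_lt ?_ (hJ n hZ)
    rw [Real.rpow_natCast]
    exact_mod_cast natCast_pow_le_Jcount u k n
  exact ((Real.rpow_lt_rpow_left_iff hn).1 hpow).le

lemma Jcount_div_add_one_le {u k p c : ℕ} {X M L : ℝ} (hX : 1 ≤ X) (hM : 0 < M) (hMp : M ≤ p)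
    (hMc : M ^ c ≤ X ^ (1 / 2 : ℝ))
    (hJ : ∀ Y, X ^ (1 / 2 : ℝ) ≤ Y → (Jcount u k Y : ℝ) < Y ^ L) :
    (Jcount u k (X / (p : ℝ) ^ c + 1) : ℝ) ≤ (2 * (X / M ^ c)) ^ L := by
  have hroot : 1 ≤ X ^ (1 / 2 : ℝ) := Real.one_le_rpow hX (by norm_num)
  have hdiv : X ^ (1 / 2 : ℝ) ≤ X / M ^ c := by
    rw [le_div_iff₀ (by positivity)]
    calc X ^ (1 / 2 : ℝ) * M ^ c ≤ X ^ (1 / 2 : ℝ) * X ^ (1 / 2 : ℝ) := by gcongr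
      _ = X := by rw [← Real.sqrt_eq_rpow, Real.mul_self_sqrt (by linarith)]
  have hp : X / (p : ℝ) ^ c ≤ X / M ^ c := by gcongr
  calc (Jcount u k (X / (p : ℝ) ^ c + 1) : ℝ) ≤ Jcount u k (2 * (X / M ^ c)) :=
        Nat.cast_le.2 (Jcount_mono u k (by linarith))
    _ ≤ _ := (hJ _ (by linarith)).le

lemma Imax_le_of_Jcount_lt {k p r t a c : ℕ} {X M L : ℝ} (hX : 1 ≤ X) (hM : 1 ≤ M)
    (hMp : M ≤ p) (hac : a ≤ c) (hMc : M ^ c ≤ X ^ (1 / 2 : ℝ))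
    (hJ : ∀ Y, X ^ (1 / 2 : ℝ) ≤ Y → (Jcount (r * (t + 1)) k Y : ℝ) < Y ^ L) :
    Imax k p r (r * t) X a c ≤
      2 * (2 * (X / M ^ a)) ^ L * (M ^ (c - a)) ^ (-((r * t : ℕ) : ℝ)) := by
  have hM0 : 0 < M := by linarith
  have hp : 0 < p := by exact_mod_cast hM0.trans_le hMp
  have hMa : M ^ a ≤ X ^ (1 / 2 : ℝ) := (pow_le_pow_right₀ hM hac).trans hMc
  have hJa := Jcount_div_add_one_le hX hM0 hMp hMa hJ
  have hJc := Jcount_div_add_one_le hX hM0 hMp hMc hJ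
  have hW0 : 0 < 2 * (X / M ^ a) := by positivity
  have hWD : 2 * (X / M ^ c) = 2 * (X / M ^ a) / M ^ (c - a) := by
    rw [mul_div_assoc, div_div, ← pow_add, Nat.add_sub_cancel' hac]
  rw [hWD] at hJc
  have hD : 1 ≤ M ^ (c - a) := one_le_pow₀ hM
  set D := M ^ (c - a)
  set W := 2 * (X / M ^ a)
  have hexp : D ^ (-(L * t / (t + 1))) ≤ D ^ (-((r * t : ℕ) : ℝ)) := by
    have hL : (r * (t + 1) : ℝ) ≤ L := by exact_mod_cast natCast_le_of_Jcount_lt_rpow hJ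
    refine Real.rpow_le_rpow_of_exponent_le hD (neg_le_neg ?_)
    rw [le_div_iff₀ (by positivity), Nat.cast_mul, mul_right_comm]
    gcongr
  refine Real.sSup_le ?_ (by positivity)
  rintro _ ⟨ξ, η, -, -, -, -, -, rfl⟩
  obtain ⟨e, he, hbalance⟩ := exists_young_weight hW0.le (by linarith : 0 < D) L t
  calc Iab k p r (r * t) X a c ξ η ≤ e⁻¹ * (W / D) ^ L + e ^ t * W ^ L :=
        (Iab_le_young hp k r t X a c ξ η he).trans (by gcongr)
    _ = 2 * W ^ L * D ^ (-(L * t / (t + 1))) := hbalance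
    _ ≤ _ := by gcongr

/-- With `H = 15(b - a)`, the trivial saving `16s(b - a)θ` at the end of the iteration exceeds the
total cost `(10 + 15/4 + 2)s(b - a)θ` by `s(b - a)θ/4 ≥ θ/2`, which absorbs the excess `δ`. -/
lemma terminal_bound_le {X θ δ l s : ℝ} {a b : ℕ} (hX : 1 ≤ X) (hθ : 0 ≤ θ) (hδθ : δ ≤ θ / 2)
    (hs : 2 ≤ s) (hab : a < b) (hθa : θ * a ≤ 1) :
    ((X ^ θ) ^ (15 * (b - a))) ^ (2 * s / 3) *
        ((X / (X ^ θ) ^ a) ^ (l + δ) * ((X ^ θ) ^ (b + 15 * (b - a) - a)) ^ (-s)) ≤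
      ((X ^ θ) ^ (15 * (b - a))) ^ (-s / 4) * (X / (X ^ θ) ^ b) ^ (2 * s) *
        (X / (X ^ θ) ^ a) ^ (l - 2 * s) := by
  have hX0 : 0 < X := by linarith
  have hpow (n : ℕ) : (X ^ θ) ^ n = X ^ (θ * n) := (Real.rpow_mul_natCast hX0.le θ n).symm
  have hdiv (n : ℕ) : X / (X ^ θ) ^ n = X ^ (1 - θ * n) := by
    rw [hpow, Real.rpow_sub hX0, Real.rpow_one]
  obtain ⟨d, rfl⟩ := Nat.exists_eq_add_of_lt hab
  rw [show a + d + 1 - a = d + 1 by omega,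
    show a + d + 1 + 15 * (d + 1) - a = 16 * (d + 1) by omega]
  simp only [hdiv]
  simp only [hpow, ← Real.rpow_mul hX0.le, ← Real.rpow_add hX0]
  refine Real.rpow_le_rpow_of_exponent_le hX ?_
  push_cast
  have hsaving : θ * 2 ≤ θ * (s * (d + 1)) := by
    gcongr
    nlinarith [(d.cast_nonneg : (0 : ℝ) ≤ d)]
  have hexcess : (1 - θ * a) * δ ≤ θ / 2 := by
    calc (1 - θ * a) * δ ≤ (1 - θ * a) * (θ / 2) :=
          mul_le_mul_of_nonneg_left hδθ (sub_nonneg.2 hθa)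
      _ ≤ θ / 2 := mul_le_of_le_one_left (by positivity) (sub_le_self 1 (by positivity))
  linarith

lemma rpow_mul_Imax_terminal_le {k p r t a b : ℕ} {X θ δ l : ℝ} (hr : 1 ≤ r) (ht : 2 ≤ t)
    (hθ : 0 < θ) (hδθ : δ ≤ θ / 2) (hX : 1 ≤ X)
    (hJ : ∀ Y, X ^ (1 / 2 : ℝ) ≤ Y → (Jcount (r * (t + 1)) k Y : ℝ) < Y ^ (l + δ))
    (hp : X ^ θ ≤ p) (hab : a < b) (hb : (b : ℝ) + 15 * ((b : ℝ) - a) ≤ (2 * θ)⁻¹) :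
    ((X ^ θ) ^ (15 * (b - a))) ^ (2 * ((r * t : ℕ) : ℝ) / 3) *
        Imax k p r (r * t) X a (b + 15 * (b - a)) ≤
      2 * 2 ^ (l + δ) * (((X ^ θ) ^ (15 * (b - a))) ^ (-((r * t : ℕ) : ℝ) / 4) *
        (X / (X ^ θ) ^ b) ^ (2 * ((r * t : ℕ) : ℝ)) *
          (X / (X ^ θ) ^ a) ^ (l - 2 * ((r * t : ℕ) : ℝ))) := by
  have hX0 : 0 < X := by linarith
  have hs : (2 : ℝ) ≤ ((r * t : ℕ) : ℝ) := by exact_mod_cast (by nlinarith : 2 ≤ r * t)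
  have hhalf : θ * ((b + 15 * (b - a) : ℕ) : ℝ) ≤ 1 / 2 := by
    push_cast [Nat.cast_sub hab.le]
    calc θ * (b + 15 * ((b : ℝ) - a)) ≤ θ * (2 * θ)⁻¹ := by gcongr
      _ = 1 / 2 := by field_simp
  have hθa : θ * a ≤ 1 := by
    have : θ * a ≤ θ * ((b + 15 * (b - a) : ℕ) : ℝ) := by gcongr; omega
    linarith
  have hroot : (X ^ θ) ^ (b + 15 * (b - a)) ≤ X ^ (1 / 2 : ℝ) := by
    rw [← Real.rpow_mul_natCast hX0.le]
    exact Real.rpow_le_rpow_of_exponent_le hX hhalf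
  have hac : a ≤ b + 15 * (b - a) := by omega
  have hI := Imax_le_of_Jcount_lt hX (Real.one_le_rpow hX hθ.le) hp hac hroot hJ
  have hterm := terminal_bound_le (l := l) hX hθ.le hδθ hs hab hθa
  refine (mul_le_mul_of_nonneg_left hI (by positivity)).trans ?_
  rw [Real.mul_rpow zero_le_two (by positivity), mul_assoc 2, mul_assoc (2 ^ (l + δ)),
    ← mul_assoc 2, mul_left_comm]
  exact mul_le_mul_of_nonneg_left hterm (by positivity)

lemma thetaC_pos {t : ℕ} (ht : 2 ≤ t) (N : ℕ) : 0 < thetaC t N :=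
  Real.rpow_pos_of_pos (by positivity) _

lemma deltaC_le_thetaC_div_two {t N : ℕ} (ht : 2 ≤ t) (hN : 1 ≤ N) :
    deltaC t N ≤ thetaC t N / 2 := by
  have hN' : (1 : ℝ) ≤ N := by exact_mod_cast hN
  have htN : (1 : ℝ) ≤ (t : ℝ) ^ N := one_le_pow₀ (by exact_mod_cast (by omega : 1 ≤ t))
  refine div_le_div_of_nonneg_left (thetaC_pos ht N).le two_pos ?_
  nlinarith

theorem lemma4_2_general {k r t : ℕ} (hr : 1 ≤ r) (ht : 2 ≤ t) {θ δ : ℝ} (hθ : 0 < θ)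
    (hδθ : δ ≤ θ / 2) (l : ℝ) :
    ∃ C : ℝ, 0 < C ∧ ∀ X : ℝ, 1 ≤ X →
    (∀ Y : ℝ, X ^ (1 / 2 : ℝ) ≤ Y → (Jcount (r * (t + 1)) k Y : ℝ) < Y ^ (l + δ)) →
    ∀ p : ℕ, X ^ θ ≤ p → p ≤ 2 * X ^ θ →
    ∀ a b : ℕ, 1 ≤ a → a < b → (b : ℝ) + 15 * ((b : ℝ) - a) ≤ (2 * θ)⁻¹ →
    ∃ h : ℕ, h < 15 * (b - a) ∧
      Imax k p r (r * t) X a b ≤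
        C * (((X ^ θ) ^ h) ^ (2 * ((r * t : ℕ) : ℝ) / 3) * Kmax k p r t X a (b + h) +
          ((X ^ θ) ^ (15 * (b - a))) ^ (-((r * t : ℕ) : ℝ) / 4) *
            (X / (X ^ θ) ^ b) ^ (2 * ((r * t : ℕ) : ℝ)) *
              (X / (X ^ θ) ^ a) ^ (l - 2 * ((r * t : ℕ) : ℝ))) := by
  set B : ℕ := ⌈(2 * θ)⁻¹⌉₊
  have hA := one_le_iterationConst r t
  refine ⟨iterationConst r t ^ B * (B + 2 * 2 ^ (l + δ)),
    mul_pos (pow_pos (by linarith) B) (by positivity), ?_⟩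
  intro X hX hJ p hMp hpM a b ha hab hb
  have hM : 0 < X ^ θ := by positivity
  have hp : 0 < p := by exact_mod_cast hM.trans_le hMp
  obtain ⟨h, hh, hiter⟩ := exists_Imax_le_iterationConst_pow_mul k hp hr ht X (by omega : a ≠ 0)
    (by omega : b ≠ 0) hM.le hpM (by omega : 0 < 15 * (b - a))
  refine ⟨h, hh, hiter.trans ?_⟩
  have hHB : 15 * (b - a) ≤ B := by
    have hH : ((15 * (b - a) : ℕ) : ℝ) ≤ B := by
      push_cast [Nat.cast_sub hab.le]
      linarith [Nat.le_ceil (2 * θ)⁻¹, (b.cast_nonneg : (0 : ℝ) ≤ b)]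
    exact_mod_cast hH
  have hterminal := rpow_mul_Imax_terminal_le hr ht hθ hδθ hX hJ hMp hab hb
  have hU : 0 ≤ ((X ^ θ) ^ h) ^ (2 * ((r * t : ℕ) : ℝ) / 3) * Kmax k p r t X a (b + h) :=
    mul_nonneg (by positivity) (Kmax_nonneg k p r t X (by omega) _)
  have hI := Imax_nonneg k p r (r * t) X a (b + 15 * (b - a))
  rw [mul_assoc]
  set U := ((X ^ θ) ^ h) ^ (2 * ((r * t : ℕ) : ℝ) / 3) * Kmax k p r t X a (b + h)
  set T := ((X ^ θ) ^ (15 * (b - a))) ^ (-((r * t : ℕ) : ℝ) / 4) *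
    (X / (X ^ θ) ^ b) ^ (2 * ((r * t : ℕ) : ℝ)) * (X / (X ^ θ) ^ a) ^ (l - 2 * ((r * t : ℕ) : ℝ))
  have hT : 0 ≤ T := by positivity
  calc _ ≤ iterationConst r t ^ B * (B * U + 2 * 2 ^ (l + δ) * T) := by gcongr
    _ ≤ iterationConst r t ^ B * ((B + 2 * 2 ^ (l + δ)) * (U + T)) := by
      gcongr
      rw [add_mul]
      gcongr <;> linarith

/-- Lemma 4.2: for 1 ≤ a < b with H = 15(b-a) and b + H ≤ (2θ)⁻¹, there is an
integer 0 ≤ h < H with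
I_{a,b}(X) ≤ C ((M^h)^{2s/3} K_{a,b+h}(X) + (M^H)^{-s/4} (X/M^b)^{2s} (X/M^a)^{λ-2s}). -/
theorem lemma4_2 (k r t : ℕ) (hk : 2 ≤ k)
    (ht1 : max 2 (((k : ℝ) - 1) / 2) ≤ (t : ℝ)) (ht2 : t ≤ k)
    (hr1 : 1 ≤ r) (hr2 : r ≤ k) (hrt : k ≤ r + t) :
    ∃ N₀ : ℕ, ∀ N : ℕ, N₀ ≤ N →
    ∃ C : ℝ, 0 < C ∧ ∃ X₀ : ℝ, ∀ X : ℝ, X₀ ≤ X →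
    (∀ Y : ℝ, X ^ ((1:ℝ)/2) ≤ Y →
        (Jcount (r*(t+1)) k Y : ℝ) < Y ^ (lamExp k (r*(t+1)) + deltaC t N)) →
    ∀ p : ℕ, p.Prime → Mval t N X < (p:ℝ) → (p:ℝ) ≤ 2 * Mval t N X →
    ∀ a b : ℕ, 1 ≤ a → a < b →
      (b:ℝ) + 15*((b:ℝ) - (a:ℝ)) ≤ (2 * thetaC t N)⁻¹ →
    ∃ h : ℕ, h < 15*(b-a) ∧
      Imax k p r (r*t) X a b ≤
        C * ((Mval t N X ^ h) ^ (2*((r*t : ℕ):ℝ)/3) * Kmax k p r t X a (b+h)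
          + (Mval t N X ^ (15*(b-a))) ^ (-((r*t : ℕ):ℝ)/4)
            * (X / Mval t N X ^ b) ^ (2*((r*t : ℕ):ℝ))
            * (X / Mval t N X ^ a) ^ (lamExp k (r*(t+1)) - 2*((r*t : ℕ):ℝ))) := by
  have ht : 2 ≤ t := by exact_mod_cast (le_max_left _ _).trans ht1
  refine ⟨1, fun N hN ↦ ?_⟩
  obtain ⟨C, hC, hbound⟩ := lemma4_2_general hr1 ht (thetaC_pos ht N)
    (deltaC_le_thetaC_div_two ht hN) (lamExp k (r * (t + 1)))
  exact ⟨C, hC, 1, fun X hX hJ p _ hMp hpM ↦ hbound X hX hJ p hMp.le hpM⟩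

end
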